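/- arXiv:2212.13785 — 7 statements merged into one kernel-verified Lean document; each statement's English description precedes it below -/
import Mathlib

section
/- For every natural number n, setting l = 2^(2n+1), the two integers l^2 - 2^(3n+2) + l - 2^(n+1) + 1 and l^2 + 2^(3n+2) + l + 2^(n+1) + 1 are coprime, i.e. their greatest common divisor is 1. -/
theorem phi12_factors_coprime (n : ℕ) :
    Int.gcd ((2 ^ (2 * n + 1) : ℤ) ^ 2 - 2 ^ (3 * n + 2) + (2 ^ (2 * n + 1) : ℤ) - 2 ^ (n + 1) + 1)
      ((2 ^ (2 * n + 1) : ℤ) ^ 2 + 2 ^ (3 * n + 2) + (2 ^ (2 * n + 1) : ℤ) + 2 ^ (n + 1) + 1) = 1 := by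
  rw [← Int.isCoprime_iff_gcd_eq_one]
  have h1 : (2 ^ (2 * n + 1) : ℤ) = 2 * (2 ^ n) ^ 2 := by ring
  have h2 : (2 ^ (3 * n + 2) : ℤ) = 4 * (2 ^ n) ^ 3 := by ring
  have h3 : (2 ^ (n + 1) : ℤ) = 2 * 2 ^ n := by ring
  rw [h1, h2, h3]
  generalize (2 ^ n : ℤ) = x
  set A : ℤ := (2 * x ^ 2) ^ 2 - 4 * x ^ 3 + 2 * x ^ 2 - 2 * x + 1 with hA
  have c2 : IsCoprime A 2 := ⟨1, -(2 * x ^ 4 - 2 * x ^ 3 + x ^ 2 - x), by rw [hA]; ring⟩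
  have cx : IsCoprime A x := ⟨1, -(4 * x ^ 3 - 4 * x ^ 2 + 2 * x - 2), by rw [hA]; ring⟩
  have cl : IsCoprime A (2 * x ^ 2 + 1) := ⟨1, -(2 * x ^ 2 - 2 * x), by rw [hA]; ring⟩
  obtain ⟨u, v, h⟩ := ((c2.mul_right c2).mul_right cx).mul_right cl
  refine ⟨u - v, v, ?_⟩
  rw [hA] at h ⊢
  linear_combination h
end

section
/- For every natural number n, setting l = 2^(2n+1), the exponent of the prime 5 in the prime factorization of l^12 * (l - 1) * (l^3 + 1) * (l^4 - 1) * (l^6 + 1) is exactly twice the exponent of 5 in the prime factorization of l^2 + 1. -/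
lemma two_pow_odd_mod_five (n : ℕ) : 2 ^ (2 * n + 1) % 5 = 2 ∨ 2 ^ (2 * n + 1) % 5 = 3 := by
  induction n with
  | zero => simp
  | succ k ih =>
    have h : 2 ^ (2 * (k + 1) + 1) = 4 * 2 ^ (2 * k + 1) := by ring
    omega

lemma five_part_aux (l : ℕ) (hl : l % 5 = 2 ∨ l % 5 = 3) :
    (l ^ 12 * (l - 1) * (l ^ 3 + 1) * (l ^ 4 - 1) * (l ^ 6 + 1)).factorization 5 =
      2 * (l ^ 2 + 1).factorization 5 := by
  obtain ⟨m, rfl⟩ : ∃ m, l = m + 1 := ⟨l - 1, by omega⟩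
  have hm : m % 5 = 1 ∨ m % 5 = 2 := by omega
  have h4 : (m + 1) ^ 4 - 1 = m * (m + 2) * ((m + 1) ^ 2 + 1) := by
    apply Nat.sub_eq_of_eq_add
    ring
  have key : (m + 1) ^ 12 * (m + 1 - 1) * ((m + 1) ^ 3 + 1) * ((m + 1) ^ 4 - 1) * ((m + 1) ^ 6 + 1)
      = ((m + 1) ^ 2 + 1) ^ 2 * ((m + 1) ^ 12 * m * ((m + 1) ^ 3 + 1) * (m * (m + 2)) *
        ((m + 1) ^ 2 * m * (m + 2) + 1)) := by
    rw [h4, Nat.add_sub_cancel]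
    ring
  have hc : ¬ 5 ∣ ((m + 1) ^ 12 * m * ((m + 1) ^ 3 + 1) * (m * (m + 2)) *
        ((m + 1) ^ 2 * m * (m + 2) + 1)) := by
    rw [Nat.dvd_iff_mod_eq_zero]
    rcases hm with h | h <;> simp [Nat.add_mod, Nat.mul_mod, Nat.pow_mod, h]
  rw [key]
  generalize (m + 1) ^ 12 * m * ((m + 1) ^ 3 + 1) * (m * (m + 2)) *
        ((m + 1) ^ 2 * m * (m + 2) + 1) = c at hc
  have hc0 : c ≠ 0 := by
    rintro rfl
    exact hc (dvd_zero 5)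
  rw [Nat.factorization_mul (by positivity) hc0, Nat.factorization_pow]
  simp [Nat.factorization_eq_zero_of_not_dvd hc]

theorem five_part_of_ree_group_order (n : ℕ) :
    ((2 ^ (2 * n + 1) : ℕ) ^ 12 * ((2 ^ (2 * n + 1) : ℕ) - 1) *
        ((2 ^ (2 * n + 1) : ℕ) ^ 3 + 1) * ((2 ^ (2 * n + 1) : ℕ) ^ 4 - 1) *
        ((2 ^ (2 * n + 1) : ℕ) ^ 6 + 1)).factorization 5 =
      2 * ((2 ^ (2 * n + 1) : ℕ) ^ 2 + 1).factorization 5 :=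
  five_part_aux _ (two_pow_odd_mod_five n)
end

section
/- Let n ≥ 2 be a natural number and let S be the symplectic group Sp₄(F), where F is the finite field with 2^n elements, i.e. the group of 4×4 matrices over F preserving the standard symplectic form. Then for every element x of S whose order is an odd prime, there exists g ∈ S such that 3 divides the order of the subgroup of S generated by x and g⁻¹·x·g. -/
open Matrix in
/-- In characteristic two, if `v ⬝ Mv = 0` for all `v` then `M` is symmetric. -/
theorem sp4_aux_symm {F ι : Type*} [Field F] [CharP F 2] [Fintype ι] [DecidableEq ι]
    (M : Matrix ι ι F) (h : ∀ v : ι → F, v ⬝ᵥ (M *ᵥ v) = 0) : Mᵀ = M := by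
  ext i j
  have h1 := h (Pi.single i 1)
  have h2 := h (Pi.single j 1)
  have h3 := h (Pi.single i 1 + Pi.single j 1)
  simp [mulVec_add, Matrix.mulVec_single_one] at h1 h2 h3
  rw [h1, h2] at h3
  simp only [zero_add, add_zero] at h3
  rw [transpose_apply]
  exact (CharTwo.add_eq_zero.mp (by first | exact h3 | (rw [add_comm]; exact h3)))

open Matrix in
theorem sp4_aux_exists {F : Type*} [Field F] [CharP F 2]
    (x : Matrix.symplecticGroup (Fin 2) F) (hx : x ^ 2 ≠ 1) :
    ∃ v : Fin 2 ⊕ Fin 2 → F,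
      v ⬝ᵥ ((J (Fin 2) F * (x : Matrix (Fin 2 ⊕ Fin 2) (Fin 2 ⊕ Fin 2) F)) *ᵥ v) ≠ 0 := by
  by_contra! h
  apply hx
  have hs := sp4_aux_symm _ h
  have hm := SymplecticGroup.mem_iff'.mp x.2
  rw [transpose_mul, J_transpose, CharTwo.neg_eq] at hs
  rw [hs] at hm
  apply Subtype.ext
  have h2 : J (Fin 2) F * (J (Fin 2) F * x.1 * x.1) = J (Fin 2) F * J (Fin 2) F := by rw [hm]
  rw [J_squared, CharTwo.neg_eq, Matrix.mul_assoc, ← Matrix.mul_assoc, J_squared,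
    CharTwo.neg_eq, one_mul] at h2
  simpa [pow_two] using h2

open Matrix in
theorem sp4_aux_main {F : Type*} [Field F] [CharP F 2]
    (x : Matrix.symplecticGroup (Fin 2) F) (hx : x ^ 2 ≠ 1) :
    ∃ g : Matrix.symplecticGroup (Fin 2) F, orderOf (x⁻¹ * (g⁻¹ * x * g)) = 3 := by
  obtain ⟨v, hv⟩ := sp4_aux_exists x hx
  set X : Matrix (Fin 2 ⊕ Fin 2) (Fin 2 ⊕ Fin 2) F := x.1 with hX
  have hm : Xᵀ * J (Fin 2) F * X = J (Fin 2) F := SymplecticGroup.mem_iff'.mp x.2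
  set u := X *ᵥ v with hu
  set β := v ⬝ᵥ (J (Fin 2) F *ᵥ u) with hβ
  have hv : β ≠ 0 := by rw [hβ, hu, mulVec_mulVec]; exact hv
  have hJt : (J (Fin 2) F)ᵀ = J (Fin 2) F := by rw [J_transpose, CharTwo.neg_eq]
  have alt : ∀ a : Fin 2 ⊕ Fin 2 → F, (a ᵥ* J (Fin 2) F) ⬝ᵥ a = 0 := by
    intro a
    have : ∀ r s : F, r * s + s * r = 0 := fun r s => by
      rw [mul_comm s r]; exact CharTwo.add_self_eq_zero _
    simp [J, vecMul, dotProduct, fromBlocks, Matrix.one_apply, Fin.sum_univ_two]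
    simp only [CharTwo.neg_eq]
    linear_combination this (a (Sum.inr 0)) (a (Sum.inl 0)) + this (a (Sum.inr 1)) (a (Sum.inl 1))
  have hvu : (v ᵥ* J (Fin 2) F) ⬝ᵥ u = β := (dotProduct_mulVec v (J (Fin 2) F) u).symm
  have huv : (u ᵥ* J (Fin 2) F) ⬝ᵥ v = β := by
    rw [← dotProduct_mulVec, ← hvu, dotProduct_comm, ← vecMul_transpose, hJt]
  set N := β⁻¹ • vecMulVec u (u ᵥ* J (Fin 2) F) with hN
  set N' := β⁻¹ • vecMulVec v (v ᵥ* J (Fin 2) F) with hN'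
  have hNN : N * N = 0 := by
    simp [hN, vecMulVec_mul_vecMulVec, alt]
  have hNN' : N' * N' = 0 := by
    simp [hN', vecMulVec_mul_vecMulVec, alt]
  have hNN'N : N * N' * N = N := by
    simp [hN, hN', vecMulVec_mul_vecMulVec, huv, hvu, smul_smul, hv, vecMulVec_smul, smul_vecMulVec]
  have hN'NN' : N' * N * N' = N' := by
    simp [hN, hN', vecMulVec_mul_vecMulVec, huv, hvu, smul_smul, hv, vecMulVec_smul, smul_vecMulVec]
  have hcomm : X * N' = N * X := by
    have : (u ᵥ* J (Fin 2) F) ᵥ* X = v ᵥ* J (Fin 2) F := by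
      rw [hu, ← vecMul_transpose, vecMul_vecMul, vecMul_vecMul, ← Matrix.mul_assoc, hm]
    rw [hN, hN', Matrix.mul_smul, Matrix.smul_mul, mul_vecMulVec, vecMulVec_mul, this]
  have hN0 : N ≠ 0 := by
    intro h0
    have h1 : N *ᵥ v = u := by
      rw [hN, smul_mulVec, vecMulVec_mulVec, huv]
      simp [smul_smul, hv]
    rw [h0, zero_mulVec] at h1
    apply hv
    rw [hβ, ← h1]; simp
  have hgmem : (1 + N) ∈ symplecticGroup (Fin 2) F := by
    rw [SymplecticGroup.mem_iff']
    have e1 : Nᵀ * J (Fin 2) F = J (Fin 2) F * N := by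
      rw [hN, transpose_smul, transpose_vecMulVec, Matrix.smul_mul, Matrix.mul_smul,
        mul_vecMulVec, vecMulVec_mul, ← vecMul_transpose, hJt]
    rw [transpose_add, transpose_one, add_mul, one_mul, e1, add_mul, mul_add, mul_add, mul_one,
      mul_one, Matrix.mul_assoc, hNN, mul_zero, add_zero, add_assoc, CharTwo.add_self_eq_zero,
      add_zero]
  let g : symplecticGroup (Fin 2) F := ⟨1 + N, hgmem⟩
  have hg2 : g * g = 1 := by
    apply Subtype.ext
    change (1 + N) * (1 + N) = 1
    rw [add_mul, mul_add, mul_add, hNN, one_mul, one_mul, mul_one, add_zero, add_assoc,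
      CharTwo.add_self_eq_zero, add_zero]
  have hginv : g⁻¹ = g := inv_eq_of_mul_eq_one_left hg2
  set t := x⁻¹ * g * x with ht
  have htval : (t : Matrix (Fin 2 ⊕ Fin 2) (Fin 2 ⊕ Fin 2) F) = 1 + N' := by
    have h1 : x * t = g * x := by rw [ht]; group
    have h2 : X * t.1 = X * (1 + N') := by
      rw [mul_add, hcomm, mul_one]
      have := congrArg Subtype.val h1
      change X * t.1 = (1 + N) * X at this
      rw [this, add_mul, one_mul]
    have h3 : (x⁻¹).1 * X = 1 := congrArg Subtype.val (inv_mul_cancel x)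
    have := congrArg ((x⁻¹).1 * ·) h2
    simpa only [← Matrix.mul_assoc, h3, one_mul] using this
  have ht2 : t * t = 1 := by
    have : t * t = x⁻¹ * (g * g) * x := by rw [ht]; group
    rw [this, hg2]; group
  have key : x⁻¹ * (g⁻¹ * x * g) = t * g := by rw [hginv, ht]; group
  have braid : g * t * g = t * g * t := by
    apply Subtype.ext
    change (1 + N) * t.1 * (1 + N) = t.1 * (1 + N) * t.1
    rw [htval]
    have d : ∀ A : Matrix (Fin 2 ⊕ Fin 2) (Fin 2 ⊕ Fin 2) F, A + A = 0 :=
      CharTwo.add_self_eq_zero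
    have l : (1 + N) * (1 + N') * (1 + N)
        = 1 + N' + N * N' + N' * N + (N + N) + N * N + N * N' * N := by noncomm_ring
    have r : (1 + N') * (1 + N) * (1 + N')
        = 1 + N + N * N' + N' * N + (N' + N') + N' * N' + N' * N * N' := by noncomm_ring
    rw [l, r, d, d, hNN, hNN', hNN'N, hN'NN']
    abel
  refine ⟨g, ?_⟩
  rw [key]
  haveI : Fact (Nat.Prime 3) := ⟨Nat.prime_three⟩
  apply orderOf_eq_prime
  · calc (t * g) ^ 3 = (t * g * t) * (g * t * g) := by simp only [pow_succ, pow_zero]; group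
      _ = (g * t * g) * (g * t * g) := by rw [braid]
      _ = g * t * (g * g) * t * g := by group
      _ = g * (t * t) * g := by rw [hg2]; group
      _ = 1 := by rw [ht2, mul_one, hg2]
  · intro h1
    have h2 : t = g := by
      have := eq_inv_of_mul_eq_one_left h1
      rwa [hginv] at this
    have h3 : N' = N := by
      have := congrArg Subtype.val h2
      rw [htval] at this
      exact add_left_cancel this
    rw [h3, hNN, zero_mul] at hNN'N
    exact hN0 hNN'N.symm

theorem beta3_Sp4_le_two (n : ℕ) (hn : 2 ≤ n)
    (x : Matrix.symplecticGroup (Fin 2) (GaloisField 2 n))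
    (hprime : (orderOf x).Prime) (hodd : Odd (orderOf x)) :
    ∃ g : Matrix.symplecticGroup (Fin 2) (GaloisField 2 n),
      3 ∣ Nat.card (Subgroup.closure {x, g⁻¹ * x * g} :
        Subgroup (Matrix.symplecticGroup (Fin 2) (GaloisField 2 n))) := by
  have hx : x ^ 2 ≠ 1 := by
    intro h
    have h1 := orderOf_dvd_of_pow_eq_one h
    rw [(Nat.prime_dvd_prime_iff_eq hprime Nat.prime_two).mp h1] at hodd
    exact absurd hodd (by decide)
  obtain ⟨g, hg⟩ := sp4_aux_main x hx
  refine ⟨g, ?_⟩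
  rw [← hg]
  apply Subgroup.orderOf_dvd_natCard
  exact mul_mem (inv_mem (Subgroup.subset_closure (by simp)))
    (Subgroup.subset_closure (by simp))
end

section
/- Let G be a group, L a normal subgroup of G, and x ∈ G such that G is generated by L together with x. Suppose there are elements a, b, c, d ∈ G and y ∈ G such that y lies in the subgroup generated by a⁻¹xa and b⁻¹xb, and L is contained in the subgroup generated by c⁻¹yc and d⁻¹yd. Then G is generated by the four conjugates (ac)⁻¹x(ac), (bc)⁻¹x(bc), (ad)⁻¹x(ad), (bd)⁻¹x(bd) of x. -/
theorem four_conjugates_generate {G : Type*} [Group G] (L : Subgroup G) [L.Normal]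
    (x : G) (hGgen : Subgroup.closure (L ∪ {x}) = ⊤)
    (a b c d y : G)
    (hy : y ∈ Subgroup.closure {a⁻¹ * x * a, b⁻¹ * x * b})
    (hL : L ≤ Subgroup.closure {c⁻¹ * y * c, d⁻¹ * y * d}) :
    Subgroup.closure {(a * c)⁻¹ * x * (a * c), (b * c)⁻¹ * x * (b * c),
      (a * d)⁻¹ * x * (a * d), (b * d)⁻¹ * x * (b * d)} = ⊤ := by
  set H := Subgroup.closure {(a * c)⁻¹ * x * (a * c), (b * c)⁻¹ * x * (b * c),
      (a * d)⁻¹ * x * (a * d), (b * d)⁻¹ * x * (b * d)} with hH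
  have h1 : (a * c)⁻¹ * x * (a * c) ∈ H := Subgroup.subset_closure (by simp)
  have h2 : (b * c)⁻¹ * x * (b * c) ∈ H := Subgroup.subset_closure (by simp)
  have h3 : (a * d)⁻¹ * x * (a * d) ∈ H := Subgroup.subset_closure (by simp)
  have h4 : (b * d)⁻¹ * x * (b * d) ∈ H := Subgroup.subset_closure (by simp)
  have key : ∀ e : G, (a * e)⁻¹ * x * (a * e) ∈ H → (b * e)⁻¹ * x * (b * e) ∈ H →
      e⁻¹ * y * e ∈ H := by
    intro e ha hb
    have hle : Subgroup.closure {a⁻¹ * x * a, b⁻¹ * x * b} ≤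
        H.comap (MulAut.conj e⁻¹).toMonoidHom := by
      rw [Subgroup.closure_le]
      rintro z (rfl | rfl)
      · simpa [mul_assoc] using ha
      · simpa [mul_assoc] using hb
    simpa using hle hy
  have hLH : L ≤ H := by
    refine hL.trans ((Subgroup.closure_le _).2 ?_)
    rintro z (rfl | rfl)
    · exact key c h1 h2
    · exact key d h3 h4
  -- modulo `L`, the element `x` is central
  have hK : Subgroup.closure ((L : Set G) ∪ {x}) ≤
      (Subgroup.centralizer {(QuotientGroup.mk' L x)}).comap (QuotientGroup.mk' L) := by
    rw [Subgroup.closure_le]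
    rintro z (hz | rfl)
    · have : QuotientGroup.mk' L z = 1 := (QuotientGroup.eq_one_iff z).2 hz
      simp only [SetLike.mem_coe, Subgroup.mem_comap, this, one_mem]
    · simp [Subgroup.mem_centralizer_iff]
  have hx : x ∈ H := by
    have hg : a * c ∈ Subgroup.closure ((L : Set G) ∪ {x}) := by
      rw [hGgen]; trivial
    have hcomm := Subgroup.mem_centralizer_iff.1 (hK hg) _ rfl
    have hmem : x * ((a * c)⁻¹ * x * (a * c))⁻¹ ∈ L := by
      rw [← QuotientGroup.eq_one_iff, ← QuotientGroup.mk'_apply]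
      simp only [map_mul, map_inv] at hcomm ⊢
      rw [mul_inv_eq_one, mul_assoc, hcomm, inv_mul_cancel_left]
    simpa only [inv_mul_cancel_right] using H.mul_mem (hLH hmem) h1
  rw [eq_top_iff, ← hGgen, Subgroup.closure_le]
  rintro z (hz | rfl)
  · exact hLH hz
  · exact hx
end

section
/- Define the real polynomials f₁(q) = q^28+5q^26+2q^24-17q^22+61q^18+11q^16-68q^14+11q^12+61q^10-17q^6+2q^4+5q^2+1 and f₂(q) = 2q^27+4q^25-5q^23-13q^21+24q^19+36q^17-39q^15-39q^13+36q^11+24q^9-13q^7-5q^5+4q^3+2q. Then for every real number q ≥ √2, both f₁(q) + √2·f₂(q) > 0 and f₁(q) - √2·f₂(q) > 0. -/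
noncomputable def f₁ (q : ℝ) : ℝ :=
  q^28 + 5*q^26 + 2*q^24 - 17*q^22 + 61*q^18 + 11*q^16 - 68*q^14 + 11*q^12 + 61*q^10
    - 17*q^6 + 2*q^4 + 5*q^2 + 1

noncomputable def f₂ (q : ℝ) : ℝ :=
  2*q^27 + 4*q^25 - 5*q^23 - 13*q^21 + 24*q^19 + 36*q^17 - 39*q^15 - 39*q^13 + 36*q^11
    + 24*q^9 - 13*q^7 - 5*q^5 + 4*q^3 + 2*q

/-- Substituting `q = r (1 + t)` with `r ^ 2 = 2` gives a polynomial in `t` with positive coefficients. -/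
lemma plus_pos (r t : ℝ) (hr : r ^ 2 = 2) (ht : 0 ≤ t) :
    0 < f₁ (r * (1 + t)) + r * f₂ (r * (1 + t)) := by
  have key : f₁ (r * (1 + t)) + r * f₂ (r * (1 + t)) =
    107911*t^0 + 2737024*t^1 + 34161010*t^2 + 277761680*t^3 +
    1644597720*t^4 + 7519434136*t^5 + 27513127688*t^6 + 82496151344*t^7 +
    206147451616*t^8 + 434695974336*t^9 + 780838312992*t^10 + 1203463798272*t^11 +
    1600101759552*t^12 + 1842395439488*t^13 + 1841675883776*t^14 + 1600071256320*t^15 +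
    1208062221568*t^16 + 791392252928*t^17 + 448453165568*t^18 + 218764427264*t^19 +
    91235520512*t^20 + 32218437632*t^21 + 9507342336*t^22 + 2301800448*t^23 +
    445448192*t^24 + 66273280*t^25 + 7118848*t^26 + 491520*t^27 +
    16384*t^28 := by
    have h (n : ℕ) (x : ℝ) : (r * x) ^ (2 * n) = 2 ^ n * x ^ (2 * n) := by
      rw [mul_pow, pow_mul, hr]
    have hodd (n : ℕ) (x : ℝ) : r * (r * x) ^ (2 * n + 1) = 2 ^ (n + 1) * x ^ (2 * n + 1) := by
      rw [mul_pow, ← mul_assoc, ← pow_succ', show 2 * n + 1 + 1 = 2 * (n + 1) by ring, pow_mul, hr]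
    simp only [f₁, f₂]
    generalize hs : 1 + t = s at *
    have e2 := h 1 s
    have e4 := h 2 s
    have e6 := h 3 s
    have e8 := h 4 s
    have e10 := h 5 s
    have e12 := h 6 s
    have e14 := h 7 s
    have e16 := h 8 s
    have e18 := h 9 s
    have e20 := h 10 s
    have e22 := h 11 s
    have e24 := h 12 s
    have e26 := h 13 s
    have e28 := h 14 s
    have e1 := hodd 0 s
    have e3 := hodd 1 s
    have e5 := hodd 2 s
    have e7 := hodd 3 s
    have e9 := hodd 4 s
    have e11 := hodd 5 s
    have e13 := hodd 6 s
    have e15 := hodd 7 s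
    have e17 := hodd 8 s
    have e19 := hodd 9 s
    have e21 := hodd 10 s
    have e23 := hodd 11 s
    have e25 := hodd 12 s
    have e27 := hodd 13 s
    norm_num only at e1 e2 e3 e4 e5 e6 e7 e8 e9 e10 e11 e12 e13 e14 e15 e16 e17 e18 e19 e20 e21 e22 e23 e24 e25 e26 e27 e28
    trans ((1)*s^0 + (4)*s^1 + (10)*s^2 + (16)*s^3 + (8)*s^4 + (-40)*s^5 + (-136)*s^6 + (-208)*s^7 + (0)*s^8 + (768)*s^9 + (1952)*s^10 + (2304)*s^11 + (704)*s^12 + (-4992)*s^13 + (-8704)*s^14 + (-9984)*s^15 + (2816)*s^16 + (18432)*s^17 + (31232)*s^18 + (24576)*s^19 + (0)*s^20 + (-26624)*s^21 + (-34816)*s^22 + (-20480)*s^23 + (8192)*s^24 + (32768)*s^25 + (40960)*s^26 + (32768)*s^27 + (16384)*s^28)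
    · linear_combination (1)*e28 + (5)*e26 + (2)*e24 + (-17)*e22 + (61)*e18 + (11)*e16 + (-68)*e14 + (11)*e12 + (61)*e10 + (-17)*e6 + (2)*e4 + (5)*e2 + (2)*e27 + (4)*e25 + (-5)*e23 + (-13)*e21 + (24)*e19 + (36)*e17 + (-39)*e15 + (-39)*e13 + (36)*e11 + (24)*e9 + (-13)*e7 + (-5)*e5 + (4)*e3 + (2)*e1
    · rw [← hs]; ring
  rw [key]; positivity

/-- Substituting `q = r (1 + t)` with `r ^ 2 = 2` gives a polynomial in `t` with positive coefficients. -/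
lemma minus_pos (r t : ℝ) (hr : r ^ 2 = 2) (ht : 0 ≤ t) :
    0 < f₁ (r * (1 + t)) - r * f₂ (r * (1 + t)) := by
  have key : f₁ (r * (1 + t)) - r * f₂ (r * (1 + t)) =
    9295*t^0 + 196872*t^1 + 2199634*t^2 + 17067120*t^3 +
    101246792*t^4 + 479437576*t^5 + 1856625768*t^6 + 5978819280*t^7 +
    16218613216*t^8 + 37445184704*t^9 + 74184122912*t^10 + 126911476736*t^11 +
    188362979136*t^12 + 243324987008*t^13 + 274082440960*t^14 + 269358356224*t^15 +
    230799244544*t^16 + 172074816512*t^17 + 111242396160*t^18 + 62037000192*t^19 +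
    29629317120*t^20 + 12000512000*t^21 + 4066830336*t^22 + 1132023808*t^23 +
    252116992*t^24 + 43204608*t^25 + 5349376*t^26 + 425984*t^27 +
    16384*t^28 := by
    have h (n : ℕ) (x : ℝ) : (r * x) ^ (2 * n) = 2 ^ n * x ^ (2 * n) := by
      rw [mul_pow, pow_mul, hr]
    have hodd (n : ℕ) (x : ℝ) : r * (r * x) ^ (2 * n + 1) = 2 ^ (n + 1) * x ^ (2 * n + 1) := by
      rw [mul_pow, ← mul_assoc, ← pow_succ', show 2 * n + 1 + 1 = 2 * (n + 1) by ring, pow_mul, hr]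
    simp only [f₁, f₂]
    generalize hs : 1 + t = s at *
    have e2 := h 1 s
    have e4 := h 2 s
    have e6 := h 3 s
    have e8 := h 4 s
    have e10 := h 5 s
    have e12 := h 6 s
    have e14 := h 7 s
    have e16 := h 8 s
    have e18 := h 9 s
    have e20 := h 10 s
    have e22 := h 11 s
    have e24 := h 12 s
    have e26 := h 13 s
    have e28 := h 14 s
    have e1 := hodd 0 s
    have e3 := hodd 1 s
    have e5 := hodd 2 s
    have e7 := hodd 3 s
    have e9 := hodd 4 s
    have e11 := hodd 5 s
    have e13 := hodd 6 s
    have e15 := hodd 7 s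
    have e17 := hodd 8 s
    have e19 := hodd 9 s
    have e21 := hodd 10 s
    have e23 := hodd 11 s
    have e25 := hodd 12 s
    have e27 := hodd 13 s
    norm_num only at e1 e2 e3 e4 e5 e6 e7 e8 e9 e10 e11 e12 e13 e14 e15 e16 e17 e18 e19 e20 e21 e22 e23 e24 e25 e26 e27 e28
    trans ((1)*s^0 + (-4)*s^1 + (10)*s^2 + (-16)*s^3 + (8)*s^4 + (40)*s^5 + (-136)*s^6 + (208)*s^7 + (0)*s^8 + (-768)*s^9 + (1952)*s^10 + (-2304)*s^11 + (704)*s^12 + (4992)*s^13 + (-8704)*s^14 + (9984)*s^15 + (2816)*s^16 + (-18432)*s^17 + (31232)*s^18 + (-24576)*s^19 + (0)*s^20 + (26624)*s^21 + (-34816)*s^22 + (20480)*s^23 + (8192)*s^24 + (-32768)*s^25 + (40960)*s^26 + (-32768)*s^27 + (16384)*s^28)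
    · linear_combination (1)*e28 + (5)*e26 + (2)*e24 + (-17)*e22 + (61)*e18 + (11)*e16 + (-68)*e14 + (11)*e12 + (61)*e10 + (-17)*e6 + (2)*e4 + (5)*e2 + (-2)*e27 + (-4)*e25 + (5)*e23 + (13)*e21 + (-24)*e19 + (-36)*e17 + (39)*e15 + (39)*e13 + (-36)*e11 + (-24)*e9 + (13)*e7 + (5)*e5 + (-4)*e3 + (-2)*e1
    · rw [← hs]; ring
  rw [key]; positivity

theorem f1_f2_pos (q : ℝ) (hq : Real.sqrt 2 ≤ q) :
    0 < f₁ q + Real.sqrt 2 * f₂ q ∧ 0 < f₁ q - Real.sqrt 2 * f₂ q := by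
  have h2 : Real.sqrt 2 ^ 2 = 2 := Real.sq_sqrt (by norm_num)
  have h0 : 0 < Real.sqrt 2 := by positivity
  have ht : 0 ≤ q / Real.sqrt 2 - 1 := by
    rw [sub_nonneg, le_div_iff₀ h0]; linarith
  have e : Real.sqrt 2 * (1 + (q / Real.sqrt 2 - 1)) = q := by field_simp; ring
  have a := plus_pos _ _ h2 ht
  have b := minus_pos _ _ h2 ht
  rw [e] at a b
  exact ⟨a, b⟩
end

section
/- Define the real polynomials f₃(q) = q^28+5q^26+2q^24-9q^22-8q^20-3q^18+19q^16+28q^14+19q^12-3q^10-8q^8-9q^6+2q^4+5q^2+1 and f₄(q) = 2q^27+4q^25-3q^23-7q^21-4q^19+4q^17+19q^15+19q^13+4q^11-4q^9-7q^7-3q^5+4q^3+2q. Then for every real number q ≥ √2, both f₃(q) + √2·f₄(q) > 0 and f₃(q) - √2·f₄(q) > 0. -/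
noncomputable def f₃ (q : ℝ) : ℝ :=
  q^28 + 5*q^26 + 2*q^24 - 9*q^22 - 8*q^20 - 3*q^18 + 19*q^16 + 28*q^14 + 19*q^12
    - 3*q^10 - 8*q^8 - 9*q^6 + 2*q^4 + 5*q^2 + 1

noncomputable def f₄ (q : ℝ) : ℝ :=
  2*q^27 + 4*q^25 - 3*q^23 - 7*q^21 - 4*q^19 + 4*q^17 + 19*q^15 + 19*q^13 + 4*q^11
    - 4*q^9 - 7*q^7 - 3*q^5 + 4*q^3 + 2*q

/-- `f₃` and `√2 * f₄` after the substitution `q = √2 * (1 + u)`. -/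
theorem pos_plus (u : ℝ) (hu : 0 ≤ u) :
    0 < ((2*(1+u)^2)^14 + 5*(2*(1+u)^2)^13 + 2*(2*(1+u)^2)^12 - 9*(2*(1+u)^2)^11 - 8*(2*(1+u)^2)^10 - 3*(2*(1+u)^2)^9 + 19*(2*(1+u)^2)^8 + 28*(2*(1+u)^2)^7 + 19*(2*(1+u)^2)^6 - 3*(2*(1+u)^2)^5 - 8*(2*(1+u)^2)^4 - 9*(2*(1+u)^2)^3 + 2*(2*(1+u)^2)^2 + 5*(2*(1+u)^2) + 1)
      + 2*(1+u)*(2*(2*(1+u)^2)^13 + 4*(2*(1+u)^2)^12 - 3*(2*(1+u)^2)^11 - 7*(2*(1+u)^2)^10 - 4*(2*(1+u)^2)^9 + 4*(2*(1+u)^2)^8 + 19*(2*(1+u)^2)^7 + 19*(2*(1+u)^2)^6 + 4*(2*(1+u)^2)^5 - 4*(2*(1+u)^2)^4 - 7*(2*(1+u)^2)^3 - 3*(2*(1+u)^2)^2 + 4*(2*(1+u)^2) + 2) := by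
  have h : 0 < 90935*u^0
        + 2446192*u^1
        + 32196018*u^2
        + 272792400*u^3
        + 1661077000*u^4
        + 7720559368*u^5
        + 28462190568*u^6
        + 85459644304*u^7
        + 213040685536*u^8
        + 447263501120*u^9
        + 799300064288*u^10
        + 1225677669888*u^11
        + 1622209780544*u^12
        + 1860688005248*u^13
        + 1854276414208*u^14
        + 1607281836800*u^15
        + 1211470292224*u^16
        + 792709362688*u^17
        + 448862876160*u^18
        + 218864586752*u^19
        + 91254063104*u^20
        + 32220882944*u^21
        + 9507547136*u^22
        + 2301808640*u^23
        + 445448192*u^24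
        + 66273280*u^25
        + 7118848*u^26
        + 491520*u^27
        + 16384*u^28 := by positivity
  refine lt_of_lt_of_eq h ?_
  ring

theorem pos_minus (u : ℝ) (hu : 0 ≤ u) :
    0 < ((2*(1+u)^2)^14 + 5*(2*(1+u)^2)^13 + 2*(2*(1+u)^2)^12 - 9*(2*(1+u)^2)^11 - 8*(2*(1+u)^2)^10 - 3*(2*(1+u)^2)^9 + 19*(2*(1+u)^2)^8 + 28*(2*(1+u)^2)^7 + 19*(2*(1+u)^2)^6 - 3*(2*(1+u)^2)^5 - 8*(2*(1+u)^2)^4 - 9*(2*(1+u)^2)^3 + 2*(2*(1+u)^2)^2 + 5*(2*(1+u)^2) + 1)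
      - 2*(1+u)*(2*(2*(1+u)^2)^13 + 4*(2*(1+u)^2)^12 - 3*(2*(1+u)^2)^11 - 7*(2*(1+u)^2)^10 - 4*(2*(1+u)^2)^9 + 4*(2*(1+u)^2)^8 + 19*(2*(1+u)^2)^7 + 19*(2*(1+u)^2)^6 + 4*(2*(1+u)^2)^5 - 4*(2*(1+u)^2)^4 - 7*(2*(1+u)^2)^3 - 3*(2*(1+u)^2)^2 + 4*(2*(1+u)^2) + 2) := by
  have h : 0 < 2591*u^0
        + 80920*u^1
        + 1200018*u^2
        + 11305392*u^3
        + 76230808*u^4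
        + 392552600*u^5
        + 1607509000*u^6
        + 5379527280*u^7
        + 14998825440*u^8
        + 35335143232*u^9
        + 71074365984*u^10
        + 123002575872*u^11
        + 184173443648*u^12
        + 239502917504*u^13
        + 271125065984*u^14
        + 267428732160*u^15
        + 229746689280*u^16
        + 171600761856*u^17
        + 111069204992*u^18
        + 61986975744*u^19
        + 29618327552*u^20
        + 11998787584*u^21
        + 4066658304*u^22
        + 1132015616*u^23
        + 252116992*u^24
        + 43204608*u^25
        + 5349376*u^26
        + 425984*u^27
        + 16384*u^28 := by positivity
  refine lt_of_lt_of_eq h ?_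
  ring

theorem f3_f4_pos (q : ℝ) (hq : Real.sqrt 2 ≤ q) :
    0 < f₃ q + Real.sqrt 2 * f₄ q ∧ 0 < f₃ q - Real.sqrt 2 * f₄ q := by
  have hs : 0 < Real.sqrt 2 := by positivity
  have hs2 : Real.sqrt 2 * Real.sqrt 2 = 2 := Real.mul_self_sqrt (by norm_num)
  obtain ⟨u, hu⟩ : ∃ u, q = Real.sqrt 2 * (1 + u) :=
    ⟨q / Real.sqrt 2 - 1, by field_simp; ring⟩
  have hu0 : 0 ≤ u := by
    by_contra hneg
    push Not at hneg
    nlinarith [mul_neg_of_pos_of_neg hs hneg]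
  have hq2 : q^2 = 2*(1+u)^2 := by
    rw [hu, mul_pow, pow_two (Real.sqrt 2), hs2]
  have hsq : Real.sqrt 2 * q = 2*(1+u) := by
    rw [hu, ← mul_assoc, hs2]
  have h3 : f₃ q = ((2*(1+u)^2)^14 + 5*(2*(1+u)^2)^13 + 2*(2*(1+u)^2)^12 - 9*(2*(1+u)^2)^11 - 8*(2*(1+u)^2)^10 - 3*(2*(1+u)^2)^9 + 19*(2*(1+u)^2)^8 + 28*(2*(1+u)^2)^7 + 19*(2*(1+u)^2)^6 - 3*(2*(1+u)^2)^5 - 8*(2*(1+u)^2)^4 - 9*(2*(1+u)^2)^3 + 2*(2*(1+u)^2)^2 + 5*(2*(1+u)^2) + 1) := by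
    rw [← hq2, f₃]
    ring
  have h4 : Real.sqrt 2 * f₄ q = 2*(1+u)*(2*(2*(1+u)^2)^13 + 4*(2*(1+u)^2)^12 - 3*(2*(1+u)^2)^11 - 7*(2*(1+u)^2)^10 - 4*(2*(1+u)^2)^9 + 4*(2*(1+u)^2)^8 + 19*(2*(1+u)^2)^7 + 19*(2*(1+u)^2)^6 + 4*(2*(1+u)^2)^5 - 4*(2*(1+u)^2)^4 - 7*(2*(1+u)^2)^3 - 3*(2*(1+u)^2)^2 + 4*(2*(1+u)^2) + 2) := by
    rw [← hq2, ← hsq, f₄]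
    ring
  rw [h3, h4]
  exact ⟨pos_plus u hu0, pos_minus u hu0⟩
end

section
/- Define the real polynomials f₅(q) = q^44+15q^42+14q^40-77q^38-63q^36+220q^34+65q^32-717q^30+14q^28+1807q^26+137q^24-2232q^22+137q^20+1807q^18+14q^16-717q^14+65q^12+220q^10-63q^8-77q^6+14q^4+15q^2+1 and f₆(q) = 4q^43+16q^41-16q^39-76q^37+48q^35+184q^33-244q^31-472q^29+760q^27+1036q^25-1168q^23-1168q^21+1036q^19+760q^17-472q^15-244q^13+184q^11+48q^9-76q^7-16q^5+16q^3+4q. Then for every real number q ≥ √2, both f₅(q) + √2·f₆(q) > 0 and f₅(q) - √2·f₆(q) > 0. -/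
noncomputable def f₅ (q : ℝ) : ℝ :=
  q^44 + 15*q^42 + 14*q^40 - 77*q^38 - 63*q^36 + 220*q^34 + 65*q^32 - 717*q^30
    + 14*q^28 + 1807*q^26 + 137*q^24 - 2232*q^22 + 137*q^20 + 1807*q^18 + 14*q^16
    - 717*q^14 + 65*q^12 + 220*q^10 - 63*q^8 - 77*q^6 + 14*q^4 + 15*q^2 + 1

noncomputable def f₆ (q : ℝ) : ℝ :=
  4*q^43 + 16*q^41 - 16*q^39 - 76*q^37 + 48*q^35 + 184*q^33 - 244*q^31 - 472*q^29
    + 760*q^27 + 1036*q^25 - 1168*q^23 - 1168*q^21 + 1036*q^19 + 760*q^17 - 472*q^15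
    - 244*q^13 + 184*q^11 + 48*q^9 - 76*q^7 - 16*q^5 + 16*q^3 + 4*q

-- Substitute q = √2 (1 + s) with s ≥ 0: both expressions become polynomials in s
-- with positive integer coefficients.

theorem f5_in_sq (q x : ℝ) (hx : q ^ 2 = x) :
      f₅ q = (1)*x^22 + (15)*x^21 + (14)*x^20 + (-77)*x^19 + (-63)*x^18 + (220)*x^17 +
      (65)*x^16 + (-717)*x^15 + (14)*x^14 + (1807)*x^13 + (137)*x^12 + (-2232)*x^11 + (1)*x^0 +
      (15)*x^1 + (14)*x^2 + (-77)*x^3 + (-63)*x^4 + (220)*x^5 + (65)*x^6 + (-717)*x^7 +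
      (14)*x^8 + (1807)*x^9 + (137)*x^10 := by
  subst hx
  unfold f₅
  ring

theorem f6_in_sq (q x t : ℝ) (hx : q ^ 2 = x) (ht : √2 * q = t) :
      √2 * f₆ q = t * ((4)*x^21 + (16)*x^20 + (-16)*x^19 + (-76)*x^18 + (48)*x^17 + (184)*x^16
      + (-244)*x^15 + (-472)*x^14 + (760)*x^13 + (1036)*x^12 + (-1168)*x^11 + (4)*x^0 +
      (16)*x^1 + (-16)*x^2 + (-76)*x^3 + (48)*x^4 + (184)*x^5 + (-244)*x^6 + (-472)*x^7 +
      (760)*x^8 + (1036)*x^9 + (-1168)*x^10) := by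
  subst hx ht
  unfold f₆
  ring

set_option maxHeartbeats 4000000 in
theorem f5_f6_pos (q : ℝ) (hq : Real.sqrt 2 ≤ q) :
    0 < f₅ q + Real.sqrt 2 * f₆ q ∧ 0 < f₅ q - Real.sqrt 2 * f₆ q := by
  obtain ⟨s, hs, rfl⟩ : ∃ s : ℝ, 0 ≤ s ∧ √2 * (1 + s) = q := by
    have h0 : (0 : ℝ) < √2 := by positivity
    refine ⟨q / √2 - 1, ?_, by field_simp; ring⟩
    rw [sub_nonneg, le_div_iff₀ h0]
    linarith
  have h2 : √2 * √2 = (2 : ℝ) := Real.mul_self_sqrt (by norm_num)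
  have hx : (√2 * (1 + s)) ^ 2 = 2 * (1 + s) ^ 2 := by
    rw [mul_pow, sq √2, h2]
  have ht : √2 * (√2 * (1 + s)) = 2 * (1 + s) := by
    rw [← mul_assoc, h2]
  rw [f6_in_sq _ _ _ hx ht, f5_in_sq _ _ hx]
  constructor
  · have h : 0 <
      29080647 + 1372146996*s^1 + 31569951126*s^2 + 468624347200*s^3 + 5034075958784*s^4 +
      41710796996048*s^5 + 277707515660440*s^6 + 1528753969345984*s^7 + 7105822069124048*s^8 +
      28337506669465344*s^9 + 98175815792495488*s^10 + 298443100888633088*s^11 +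
      802452412679442112*s^12 + 1920977432957141760*s^13 + 4116310728830843264*s^14 +
      7930600100093241344*s^15 + 13788240789228011520*s^16 + 21698365358908681216*s^17 +
      30983362373871437312*s^18 + 40222470401048150016*s^19 + 47545773404451750912*s^20 +
      51232655390715936768*s^21 + 50361328581022400512*s^22 + 45178018366447779840*s^23 +
      36986558789626785792*s^24 + 27624567517087088640*s^25 + 18808985249791238144*s^26 +
      11661725957874384896*s^27 + 6573679303877722112*s^28 + 3362128478370332672*s^29 +
      1556166798240219136*s^30 + 649736896388005888*s^31 + 243747751803027456*s^32 +
      81763636592246784*s^33 + 24378852253368320*s^34 + 6413759747719168*s^35 +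
      1475320633622528*s^36 + 293298429231104*s^37 + 49646983970816*s^38 + 7014738558976*s^39 +
      804903714816*s^40 + 72053948416*s^41 + 4720689152*s^42 + 201326592*s^43 + 4194304*s^44 := by positivity
    refine lt_of_lt_of_eq h ?_
    ring
  · have h : 0 <
      1032759 + 25421604*s^1 + 320667030*s^2 + 2880057920*s^3 + 21561076608*s^4 +
      145106932304*s^5 + 890466128664*s^6 + 4914185279296*s^7 + 24055631638480*s^8 +
      103903746730752*s^9 + 396475224293248*s^10 + 1342185686252288*s^11 +
      4051754704175808*s^12 + 10961424001328896*s^13 + 26693891267709312*s^14 +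
      58739737748264960*s^15 + 117169772187451392*s^16 + 212426337693379584*s^17 +
      350782934358451712*s^18 + 528491498845708288*s^19 + 727378075722761216*s^20 +
      915359864152981504*s^21 + 1053808836524851200*s^22 + 1110058095874113536*s^23 +
      1069712298552553472*s^24 + 942529138299650048*s^25 + 758643698684813312*s^26 +
      557101879449485312*s^27 + 372596293639864320*s^28 + 226463234259746816*s^29 +
      124746254616199168*s^30 + 62068869372837888*s^31 + 27782024062631936*s^32 +
      11131146498736128*s^33 + 3967970088321024*s^34 + 1249146903199744*s^35 +
      344077145735168*s^36 + 81964206915584*s^37 + 16633482969088*s^38 + 2818790391808*s^39 +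
      388057006080*s^40 + 41687187456*s^41 + 3277848576*s^42 + 167772160*s^43 + 4194304*s^44 := by positivity
    refine lt_of_lt_of_eq h ?_
    ring
end
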